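/- Let F be the free group of rank 2. For every function α: ℕ ∪ {0} → ℕ of the form α(n) = Σ_{i=0}^{n} f_i, where f_0 = 1, each f_i is a positive integer (possibly eventually zero after some index r), and there exists d > 0 with f_{i+1} ≤ d·f_i for all i, there exists an essential subgroup H ≤ F (of infinite index when α is unbounded) such that the cogrowth function Γ_{F/H} is equivalent to α, i.e., ∃C with Γ_{F/H}(n) ≤ α(Cn) and α(n) ≤ Γ_{F/H}(Cn) for all n. -/

import Mathlib

/-- The ball of radius `n` in `G` with respect to the generating set `S`
(words of length at most `n` in `S ∪ S⁻¹`). -/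
def wordBall {G : Type*} [Group G] (S : Set G) (n : ℕ) : Set G :=
  {g | ∃ l : List G, l.length ≤ n ∧ (∀ x ∈ l, x ∈ S ∨ x⁻¹ ∈ S) ∧ l.prod = g}

/-- The word length of `g` with respect to the generating set `S`. -/
noncomputable def wordLength {G : Type*} [Group G] (S : Set G) (g : G) : ℕ :=
  sInf {n | g ∈ wordBall S n}

/-- The growth function of `G` with respect to `S`. -/
noncomputable def growth {G : Type*} [Group G] (S : Set G) (n : ℕ) : ℕ :=
  (wordBall S n).ncard

/-- The cogrowth function of a subgroup `H ≤ G`: the number of right cosets `Hg`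
containing an element of word length at most `n`. -/
noncomputable def cogrowth {G : Type*} [Group G] (S : Set G) (H : Subgroup G) (n : ℕ) : ℕ :=
  ((fun g => Quotient.mk (QuotientGroup.rightRel H) g) '' wordBall S n).ncard

/-- A subgroup is essential if it intersects every nontrivial subgroup nontrivially. -/
def Essential {G : Type*} [Group G] (H : Subgroup G) : Prop :=
  ∀ K : Subgroup G, K ≠ ⊥ → H ⊓ K ≠ ⊥

/-! Take a rooted tree with `f i` vertices at level `i` and at most `d` children per vertex, and
let the generators, alternating with the level, permute each vertex cyclically with its children.
Balls around the root of this Schreier graph have size comparable to `∑ f i`. To make the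
stabilizer of the root essential, replace all vertices of suitable levels by copies of a finite
quotient of the free group, a gate, entered at `1` and left at a distant element `exit`.

The gate for a word `w` of length `r` is cyclic of large prime order `p`. There are more
homomorphisms to `ℤ/p` than elements of `ℤ/p`, so two of them agree at `w`; their difference kills
`w` and, for large `p`, maps no word of length `2r` to some residue, the exit. Consider the points
that lie above the gates of `w` or within distance `r` of the entry of one. Moving such a point,
`w` cannot reach an exit: either it only translates, hence trivially inside the gate, or it has
passed the entry and ends within `r` of an entry again. So `w` preserves this finite set, which
contains the root, and a power of `w` fixes the root.

All words receive gates at sparse levels where `f` is minimal among the later levels. The points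
added up to level `n` are then outnumbered by the vertices of levels `n + 1` to `2n`, so the growth
changes only by a linear rescaling. -/

open scoped Pointwise

section WordBall

variable {G : Type*} [Group G] {S : Set G} {m n : ℕ} {g h : G}

theorem wordBall_eq_pow (S : Set G) (n : ℕ) : wordBall S n = (insert 1 (S ∪ S⁻¹)) ^ n := by
  induction n with
  | zero =>
    ext g
    simp [wordBall, eq_comm]
  | succ n ih =>
    rw [pow_succ', ← ih]
    ext g
    constructor
    · rintro ⟨_ | ⟨a, l⟩, hl, hS, rfl⟩
      · exact ⟨1, .inl rfl, 1, ⟨[], by simp⟩, by simp⟩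
      · rw [List.forall_mem_cons] at hS
        exact ⟨a, .inr hS.1, l.prod, ⟨l, Nat.le_of_succ_le_succ hl, hS.2, rfl⟩, by simp⟩
    · rintro ⟨a, rfl | ha, _, ⟨l, hl, hS, rfl⟩, rfl⟩
      · exact ⟨l, by omega, hS, by simp⟩
      · exact ⟨a :: l, Nat.succ_le_succ hl, List.forall_mem_cons.2 ⟨ha, hS⟩, by simp⟩

theorem wordBall_mono (h : m ≤ n) : wordBall S m ⊆ wordBall S n :=
  fun _ ⟨l, hl, hS, hg⟩ => ⟨l, hl.trans h, hS, hg⟩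

theorem one_mem_wordBall (n : ℕ) : (1 : G) ∈ wordBall S n :=
  ⟨[], by simp⟩

theorem wordBall_add (S : Set G) (m n : ℕ) : wordBall S (m + n) = wordBall S m * wordBall S n := by
  simp only [wordBall_eq_pow, pow_add]

theorem mul_mem_wordBall (hg : g ∈ wordBall S m) (hh : h ∈ wordBall S n) :
    g * h ∈ wordBall S (m + n) :=
  wordBall_add S m n ▸ Set.mul_mem_mul hg hh

theorem inv_mem_wordBall (hg : g ∈ wordBall S n) : g⁻¹ ∈ wordBall S n := by
  rw [wordBall_eq_pow] at hg ⊢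
  rw [← Set.mem_inv, ← inv_pow]
  simpa [Set.union_comm] using hg

theorem mem_wordBall_zero : g ∈ wordBall S 0 ↔ g = 1 := by
  simp [wordBall_eq_pow]

theorem mem_wordBall_one : g ∈ wordBall S 1 ↔ g = 1 ∨ g ∈ S ∨ g⁻¹ ∈ S := by
  simp [wordBall_eq_pow]

theorem pow_mem_wordBall (hg : g ∈ S) (n : ℕ) : g ^ n ∈ wordBall S n :=
  wordBall_eq_pow S n ▸ Set.pow_mem_pow (by simp [hg])

theorem exists_mem_wordBall (hS : Subgroup.closure S = ⊤) (g : G) : ∃ n, g ∈ wordBall S n := by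
  have hg : g ∈ Submonoid.closure (S ∪ S⁻¹) := by
    rw [← Subgroup.closure_toSubmonoid, hS]
    trivial
  obtain ⟨l, hl, rfl⟩ := Submonoid.exists_list_of_mem_closure hg
  exact ⟨l.length, l, le_rfl, hl, rfl⟩

theorem finite_wordBall (hS : S.Finite) (n : ℕ) : (wordBall S n).Finite := by
  rw [wordBall_eq_pow]
  induction n with
  | zero => simp
  | succ n ih => exact pow_succ (insert 1 (S ∪ S⁻¹)) n ▸ ih.mul ((hS.union hS.inv).insert 1)

end WordBall

section OrbitBall

variable {G X : Type*} [Group G] [MulAction G X] {S : Set G} {m n : ℕ} {x y z : X}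

/-- The ball of radius `n` around `x` in the Schreier graph of the action of `G` on `X`. -/
def orbitBall (S : Set G) (n : ℕ) (x : X) : Set X :=
  (· • x) '' wordBall S n

theorem mem_orbitBall_self (n : ℕ) (x : X) : x ∈ orbitBall S n x :=
  ⟨1, one_mem_wordBall n, one_smul G x⟩

theorem orbitBall_mono (h : m ≤ n) : orbitBall S m x ⊆ orbitBall S n x :=
  Set.image_mono (wordBall_mono h)

theorem mem_orbitBall_symm (h : y ∈ orbitBall S n x) : x ∈ orbitBall S n y := by
  obtain ⟨g, hg, rfl⟩ := h
  exact ⟨g⁻¹, inv_mem_wordBall hg, inv_smul_smul g x⟩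

theorem mem_orbitBall_trans (hy : y ∈ orbitBall S m x) (hz : z ∈ orbitBall S n y) :
    z ∈ orbitBall S (m + n) x := by
  obtain ⟨g, hg, rfl⟩ := hy
  obtain ⟨h, hh, rfl⟩ := hz
  exact ⟨h * g, add_comm m n ▸ mul_mem_wordBall hh hg, mul_smul h g x⟩

theorem finite_orbitBall (hS : S.Finite) (n : ℕ) (x : X) : (orbitBall S n x).Finite :=
  (finite_wordBall hS n).image _

theorem cogrowth_stabilizer (S : Set G) (x : X) (n : ℕ) :
    cogrowth S (MulAction.stabilizer G x) n = (orbitBall S n x).ncard := by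
  let e := QuotientGroup.quotientRightRelEquivQuotientLeftRel (MulAction.stabilizer G x)
  have hinj := (MulAction.injective_ofQuotientStabilizer G x).comp e.injective
  rw [cogrowth, ← Set.ncard_image_of_injective _ hinj, Set.image_image]
  change ((fun g : G => g⁻¹ • x) '' wordBall S n).ncard = _
  congr 1
  ext y
  constructor <;> rintro ⟨g, hg, rfl⟩ <;> exact ⟨g⁻¹, inv_mem_wordBall hg, by simp⟩

theorem cogrowth_le_index (S : Set G) {H : Subgroup G} (hH : H.index ≠ 0) (n : ℕ) :
    cogrowth S H n ≤ H.index := by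
  let e := QuotientGroup.quotientRightRelEquivQuotientLeftRel H
  have : H.FiniteIndex := ⟨hH⟩
  have : Finite (Quotient (QuotientGroup.rightRel H)) := .of_equiv _ e.symm
  exact (Set.ncard_le_card _).trans_eq (Nat.card_congr e)

theorem exists_pow_mem_stabilizer {s : Set X} (hs : s.Finite) {g : G}
    (hg : Set.MapsTo (g • ·) s s) (hx : x ∈ s) : ∃ m ≠ 0, g ^ m ∈ MulAction.stabilizer G x := by
  have := hs.to_subtype
  have hinj : Function.Injective (hg.restrict (g • ·) s s) :=
    hg.restrict_inj.2 (MulAction.injective g).injOn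
  obtain ⟨m, hm, hmx⟩ := hinj.mem_periodicPts ⟨x, hx⟩
  refine ⟨m, hm.ne', ?_⟩
  rw [Function.IsPeriodicPt, Function.IsFixedPt, hg.iterate_restrict] at hmx
  simpa [smul_iterate] using congrArg Subtype.val hmx

end OrbitBall

theorem essential_of_forall_exists_pow_mem {G : Type*} [Group G] [IsMulTorsionFree G]
    {H : Subgroup G} (h : ∀ g : G, ∃ m ≠ 0, g ^ m ∈ H) : Essential H := by
  intro K hK hHK
  obtain ⟨g, hgK, hg⟩ := K.bot_or_exists_ne_one.resolve_left hK
  obtain ⟨m, hm, hmH⟩ := h g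
  have hmem : g ^ m ∈ H ⊓ K := ⟨hmH, pow_mem hgK m⟩
  rw [hHK, Subgroup.mem_bot, pow_eq_one_iff_left hm] at hmem
  exact hg hmem

theorem exists_perm_transitive_on_fibers {Y Z : Type*} {p : Y → Z}
    (hp : ∀ z, (p ⁻¹' {z}).Finite) :
    ∃ c : Equiv.Perm Y, (∀ y, p (c y) = p y) ∧
      ∀ y y', p y = p y' → ∃ m < (p ⁻¹' {p y}).ncard, (c ^ m) y = y' := by
  have (z : Z) : Finite {y // p y = z} := hp z
  choose F hF using fun z => (Set.countable_univ (α := {y // p y = z})).exists_cycleOn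
  let e := (Equiv.sigmaFiberEquiv p).permCongrHom
  let c := e (Equiv.Perm.sigmaCongrRightHom _ F)
  have hc (m : ℕ) (y : Y) : (c ^ m) y = ((F (p y) ^ m) ⟨y, rfl⟩ : {y' // p y' = p y}) := by
    simp only [c, ← map_pow]
    rfl
  refine ⟨c, fun y => (F (p y) ⟨y, rfl⟩).2, fun y y' h => ?_⟩
  have := Fintype.ofFinite {y' // p y' = p y}
  have hcyc : (F (p y)).IsCycleOn (Finset.univ : Finset {y' // p y' = p y}) := by
    simpa using (hF (p y)).1
  obtain ⟨m, hm, hmy⟩ :=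
    hcyc.exists_pow_eq (Finset.mem_univ ⟨y, rfl⟩) (Finset.mem_univ ⟨y', h.symm⟩)
  refine ⟨m, ?_, by rw [hc, hmy]⟩
  rwa [Finset.card_univ, ← Nat.card_eq_fintype_card] at hm

theorem exists_pow_apply_eq_of_agree {Y : Type*} {σ τ : Equiv.Perm Y} {u z : Y} {n : ℕ}
    (hn : (τ ^ n) z = u) (h : ∀ m, (τ ^ m) z ≠ u → σ ((τ ^ m) z) = τ ((τ ^ m) z)) :
    ∃ m ≤ n, (σ ^ m) z = u := by
  induction n generalizing z with
  | zero => exact ⟨0, le_rfl, hn⟩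
  | succ n ih =>
    by_cases hz : z = u
    · exact ⟨0, Nat.zero_le _, hz⟩
    have hσ : σ z = τ z := h 0 hz
    obtain ⟨m, hm, hmz⟩ := ih (z := τ z) hn fun m => h (m + 1)
    exact ⟨m + 1, by omega, by rw [pow_succ, Equiv.Perm.mul_apply, hσ, hmz]⟩

section Gate

variable {α : Type*}

/-- The standard basis of the free group, with respect to which words are measured. -/
abbrev freeBasis (α : Type*) : Set (FreeGroup α) := Set.range FreeGroup.of

/-- A finite quotient `φ` of the free group with a marked element `exit`. Its Cayley graph is
entered at `1` and left at `exit`, which must be a power of a single generator so that walking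
along that generator crosses the gate. -/
structure Gate (α : Type*) where
  Q : Type
  [group : Group Q]
  [finite : Finite Q]
  φ : FreeGroup α →* Q
  exit : Q
  exit_mem : ∃ x, exit ∈ Subgroup.zpowers (φ (FreeGroup.of x))

attribute [instance] Gate.group Gate.finite

noncomputable instance [Nonempty α] : Inhabited (Gate α) :=
  ⟨{ Q := Unit, φ := 1, exit := 1, exit_mem := ⟨Classical.arbitrary α, one_mem _⟩ }⟩

/-- `w` dies in the gate, and `exit` cannot be reached along `w` from a point that is as close to
`1` as `w` is long. -/
def Gate.Blocks (P : Gate α) (w : FreeGroup α) : Prop :=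
  P.φ w = 1 ∧ ∃ r, w ∈ wordBall (freeBasis α) r ∧ P.exit ∉ P.φ '' wordBall (freeBasis α) (2 * r)

theorem exists_ne_lift_eq {A : Type*} [Group A] [Finite A] [Nontrivial A] [Finite α]
    [Nontrivial α] (w : FreeGroup α) :
    ∃ u u' : α → A, u ≠ u' ∧ FreeGroup.lift u w = FreeGroup.lift u' w := by
  by_contra! hne
  have hinj : Function.Injective fun u : α → A => FreeGroup.lift u w :=
    fun u u' h => by_contra fun huu' => hne u u' huu' h
  have hcard := Nat.card_le_card_of_injective _ hinj
  rw [Nat.card_fun] at hcard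
  exact hcard.not_gt (lt_self_pow₀ Finite.one_lt_card Finite.one_lt_card)

theorem exists_gate_blocks [Finite α] [Nontrivial α] (w : FreeGroup α) :
    ∃ P : Gate α, P.Blocks w := by
  obtain ⟨r, hr⟩ := exists_mem_wordBall (FreeGroup.closure_range_of α) w
  have hfin : (wordBall (freeBasis α) (2 * r)).Finite := finite_wordBall (Set.finite_range _) _
  obtain ⟨p, hp, hprime⟩ := Nat.exists_infinite_primes ((wordBall (freeBasis α) (2 * r)).ncard + 1)
  have : Fact p.Prime := ⟨hprime⟩
  let A := Multiplicative (ZMod p)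
  have hA : Nat.card A = p := Nat.card_zmod p
  obtain ⟨u, u', hne, hw⟩ := exists_ne_lift_eq (A := A) w
  obtain ⟨x, hx⟩ := Function.ne_iff.1 hne
  let φ : FreeGroup α →* A := FreeGroup.lift u / FreeGroup.lift u'
  obtain ⟨e, he⟩ : ∃ e, e ∉ φ '' wordBall (freeBasis α) (2 * r) := by
    by_contra! hall
    have hle := Set.ncard_image_le (f := φ) hfin
    rw [Set.eq_univ_of_forall hall, Set.ncard_univ, hA] at hle
    omega
  have hφx : φ (FreeGroup.of x) ≠ 1 := by simpa [φ, div_eq_one] using hx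
  have hφw : φ w = 1 := by simpa [φ, div_eq_one] using hw
  exact ⟨⟨A, φ, e, x, mem_zpowers_of_prime_card hA hφx⟩, hφw, r, hr, he⟩

end Gate

/-- A rooted forest with finite levels `V i`, whose vertices at level `i` are to be replaced by
copies of `gate i`. The edges from level `i + 1` to level `i` will be traversed by the generator
`letter i`; consecutive letters differ so that no vertex is glued by the same generator to both
its parent and its children. -/
structure GroupTree (α : Type*) where
  V : ℕ → Type
  [finite_V : ∀ i, Finite (V i)]
  parent : ∀ {i}, V (i + 1) → V i
  gate : ℕ → Gate α
  letter : ℕ → α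
  letter_succ_ne : ∀ i, letter (i + 1) ≠ letter i

namespace GroupTree

attribute [instance] finite_V

variable {α : Type*}

/-- The points of the Schreier graph: an element of the gate placed at a vertex. -/
structure Point (T : GroupTree α) where
  level : ℕ
  vertex : T.V level
  elt : (T.gate level).Q

variable (T : GroupTree α)

/-- The point of the gate at `v` glued to the parent of `v`. -/
def entry {i : ℕ} (v : T.V i) : T.Point := ⟨i, v, 1⟩

/-- The point of the gate at `v` glued to the children of `v`. -/
def exit {i : ℕ} (v : T.V i) : T.Point := ⟨i, v, (T.gate i).exit⟩

theorem setOf_level_lt_eq_range (n : ℕ) : {y : T.Point | y.level < n} =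
    Set.range fun z : Σ i : Fin n, T.V i × (T.gate i).Q => ⟨z.1, z.2.1, z.2.2⟩ := by
  ext ⟨i, v, g⟩
  constructor
  · exact fun h => ⟨⟨⟨i, h⟩, v, g⟩, rfl⟩
  · rintro ⟨⟨j, z⟩, h⟩
    exact h ▸ j.2

theorem finite_setOf_level_lt (n : ℕ) : {y : T.Point | y.level < n}.Finite := by
  rw [setOf_level_lt_eq_range]
  exact Set.finite_range _

theorem ncard_setOf_level_lt_le (n : ℕ) : {y : T.Point | y.level < n}.ncard ≤
    ∑ i ∈ Finset.range n, Nat.card (T.V i) * Nat.card (T.gate i).Q := by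
  rw [setOf_level_lt_eq_range]
  refine (Finite.card_range_le _).trans_eq ?_
  simp only [Nat.card_sigma, Nat.card_prod, Finset.sum_range]

section Glue

open Classical in
/-- The map whose fibres are the sets of points permuted cyclically by the generator `x`: an exit
together with the entries of the children, or a single point. -/
noncomputable def glue (x : α) : T.Point → T.Point
  | ⟨0, v, g⟩ => ⟨0, v, g⟩
  | ⟨i + 1, v, g⟩ => if g = 1 ∧ T.letter i = x then T.exit (T.parent v) else ⟨i + 1, v, g⟩

/-- `y` is an endpoint of an edge joining levels `i` and `i + 1`. -/
def IsPort (i : ℕ) (y : T.Point) : Prop :=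
  (∃ v : T.V i, y = T.exit v) ∨ ∃ v : T.V (i + 1), y = T.entry v

variable {T}

theorem glue_cases (x : α) (y : T.Point) :
    T.glue x y = y ∨ ∃ (i : ℕ) (v : T.V (i + 1)), T.letter i = x ∧ y = T.entry v ∧
      T.glue x y = T.exit (T.parent v) := by
  obtain ⟨_ | i, v, g⟩ := y
  · exact .inl rfl
  · by_cases h : g = 1 ∧ T.letter i = x
    · exact .inr ⟨i, v, h.2, by rw [h.1, entry], if_pos h⟩
    · exact .inl (if_neg h)

theorem glue_entry {i : ℕ} (v : T.V (i + 1)) :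
    T.glue (T.letter i) (T.entry v) = T.exit (T.parent v) :=
  if_pos ⟨rfl, rfl⟩

theorem glue_exit {i : ℕ} (v : T.V i) : T.glue (T.letter i) (T.exit v) = T.exit v := by
  rcases glue_cases (T.letter i) (T.exit v) with h | ⟨j, w, hj, hy, -⟩
  · exact h
  · obtain rfl : i = j + 1 := congrArg Point.level hy
    exact absurd hj.symm (T.letter_succ_ne j)

theorem eq_or_isPort_of_glue_eq {x : α} {y y' : T.Point} (h : T.glue x y = T.glue x y') :
    y = y' ∨ ∃ i, T.letter i = x ∧ T.IsPort i y ∧ T.IsPort i y' := by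
  rcases glue_cases x y with hy | ⟨i, v, hi, rfl, hy⟩ <;>
    rcases glue_cases x y' with hy' | ⟨i', v', hi', rfl, hy'⟩
  · exact .inl (by rw [← hy, h, hy'])
  · exact .inr ⟨i', hi', .inl ⟨_, hy.symm.trans (h.trans hy')⟩, .inr ⟨v', rfl⟩⟩
  · exact .inr ⟨i, hi, .inr ⟨v, rfl⟩, .inl ⟨_, hy'.symm.trans (h.symm.trans hy)⟩⟩
  · obtain rfl : i = i' := congrArg Point.level (hy.symm.trans (h.trans hy'))
    exact .inr ⟨i, hi, .inr ⟨v, rfl⟩, .inr ⟨v', rfl⟩⟩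

theorem finite_glue_fiber (x : α) (z : T.Point) : (T.glue x ⁻¹' {z}).Finite := by
  refine (T.finite_setOf_level_lt (z.level + 2)).subset ?_
  rintro y rfl
  rw [Set.mem_ofPred_eq]
  rcases glue_cases x y with h | ⟨i, v, -, rfl, h⟩
  · rw [h]
    exact Nat.lt_add_of_pos_right two_pos
  · rw [h]
    exact Nat.lt_succ_self (i + 1)

theorem glue_fiber_exit_subset (x : α) {i : ℕ} (u : T.V i) :
    T.glue x ⁻¹' {T.exit u} ⊆ insert (T.exit u) (T.entry '' (T.parent ⁻¹' {u})) := by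
  rintro y (hy : T.glue x y = T.exit u)
  rcases glue_cases x y with h | ⟨j, v, -, rfl, h⟩
  · exact .inl (h.symm.trans hy)
  · have hexit := h.symm.trans hy
    obtain rfl : j = i := congrArg Point.level hexit
    exact .inr ⟨v, by simpa [exit] using hexit, rfl⟩

theorem ncard_glue_fiber_exit_le (x : α) {i : ℕ} (u : T.V i) :
    (T.glue x ⁻¹' {T.exit u}).ncard ≤ (T.parent ⁻¹' {u}).ncard + 1 :=
  calc
    _ ≤ (insert (T.exit u) (T.entry '' (T.parent ⁻¹' {u}))).ncard :=
      Set.ncard_le_ncard (glue_fiber_exit_subset x u)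
    _ ≤ (T.entry '' (T.parent ⁻¹' {u})).ncard + 1 := Set.ncard_insert_le _ _
    _ ≤ (T.parent ⁻¹' {u}).ncard + 1 := Nat.succ_le_succ (Set.ncard_image_le)

end Glue

section Action

/-- A permutation cyclic on each fibre of `glue x`, through which the generator `x` moves between
gates. -/
noncomputable def portPerm (x : α) : Equiv.Perm T.Point :=
  (exists_perm_transitive_on_fibers (finite_glue_fiber (T := T) x)).choose

/-- The action of the free group by left translations inside each gate. -/
def translation : FreeGroup α →* Equiv.Perm T.Point where
  toFun g :=
    { toFun := fun y => ⟨y.level, y.vertex, (T.gate y.level).φ g * y.elt⟩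
      invFun := fun y => ⟨y.level, y.vertex, ((T.gate y.level).φ g)⁻¹ * y.elt⟩
      left_inv := fun y => by simp
      right_inv := fun y => by simp }
  map_one' := by ext1 y; simp
  map_mul' g h := by ext1 y; simp [mul_assoc]

/-- The generator `x` acts by `portPerm x` followed by the translation by `x`. -/
noncomputable instance : MulAction (FreeGroup α) T.Point :=
  MulAction.compHom _ (FreeGroup.lift fun x => T.translation (FreeGroup.of x) * T.portPerm x)

variable {T}

theorem glue_portPerm (x : α) (y : T.Point) : T.glue x (T.portPerm x y) = T.glue x y :=
  (exists_perm_transitive_on_fibers (finite_glue_fiber (T := T) x)).choose_spec.1 y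

theorem exists_portPerm_pow {x : α} {y y' : T.Point} (h : T.glue x y = T.glue x y') :
    ∃ m < (T.glue x ⁻¹' {T.glue x y}).ncard, (T.portPerm x ^ m) y = y' :=
  (exists_perm_transitive_on_fibers (finite_glue_fiber (T := T) x)).choose_spec.2 y y' h

theorem portPerm_cases (x : α) (y : T.Point) : T.portPerm x y = y ∨
    ∃ i, T.letter i = x ∧ T.IsPort i (T.portPerm x y) ∧ T.IsPort i y :=
  eq_or_isPort_of_glue_eq (glue_portPerm x y)

theorem translation_apply (g : FreeGroup α) (y : T.Point) :
    T.translation g y = ⟨y.level, y.vertex, (T.gate y.level).φ g * y.elt⟩ := rfl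

theorem smul_eq (g : FreeGroup α) (y : T.Point) : g • y =
    FreeGroup.lift (fun x => T.translation (FreeGroup.of x) * T.portPerm x) g y := rfl

theorem of_smul (x : α) (y : T.Point) :
    FreeGroup.of x • y = T.translation (FreeGroup.of x) (T.portPerm x y) := by
  simp [smul_eq]

theorem inv_of_smul (x : α) (y : T.Point) :
    (FreeGroup.of x)⁻¹ • y = (T.portPerm x).symm (T.translation (FreeGroup.of x)⁻¹ y) := by
  rw [inv_smul_eq_iff, of_smul, Equiv.apply_symm_apply, ← Equiv.Perm.mul_apply, ← map_mul,
    mul_inv_cancel, map_one, Equiv.Perm.one_apply]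

theorem smul_letter_cases {a : FreeGroup α} (ha : a ∈ wordBall (freeBasis α) 1) (y : T.Point) :
    a • y = T.translation a y ∨ ∃ i, ∃ b ∈ wordBall (freeBasis α) 1,
      ∃ c ∈ wordBall (freeBasis α) 1, ∃ p, T.IsPort i (T.translation b y) ∧ T.IsPort i p ∧
        a • y = T.translation c p := by
  have h1 : (1 : FreeGroup α) ∈ wordBall (freeBasis α) 1 := one_mem_wordBall 1
  rcases mem_wordBall_one.1 ha with rfl | ⟨x, rfl⟩ | ⟨x, hx⟩
  · exact .inl (by simp)
  · rw [of_smul]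
    refine (portPerm_cases x y).imp (congrArg _) fun ⟨i, _, hp, hy⟩ => ?_
    exact ⟨i, 1, h1, _, ha, _, by simpa using hy, hp, rfl⟩
  · obtain rfl : a = (FreeGroup.of x)⁻¹ := inv_eq_iff_eq_inv.1 hx.symm
    rw [inv_of_smul]
    generalize hz : T.translation (FreeGroup.of x)⁻¹ y = z
    have hcases := portPerm_cases x ((T.portPerm x).symm z)
    rw [Equiv.apply_symm_apply] at hcases
    refine hcases.imp Eq.symm fun ⟨i, _, hp, hy⟩ => ?_
    exact ⟨i, _, ha, 1, h1, _, hz ▸ hp, hy, by simp⟩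

theorem IsPort.le_level {i : ℕ} {y : T.Point} (h : T.IsPort i y) : i ≤ y.level := by
  rcases h with ⟨v, rfl⟩ | ⟨v, rfl⟩
  exacts [le_rfl, Nat.le_succ i]

theorem IsPort.level_le {i : ℕ} {y : T.Point} (h : T.IsPort i y) : y.level ≤ i + 1 := by
  rcases h with ⟨v, rfl⟩ | ⟨v, rfl⟩
  exacts [Nat.le_succ i, le_rfl]

theorem level_smul_le {n : ℕ} {g : FreeGroup α} (hg : g ∈ wordBall (freeBasis α) n)
    (y : T.Point) : (g • y).level ≤ n + y.level := by
  induction n generalizing g with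
  | zero =>
    obtain rfl := mem_wordBall_zero.1 hg
    simp
  | succ n ih =>
    rw [add_comm n, wordBall_add] at hg
    obtain ⟨a, ha, g, hg, rfl⟩ := hg
    have hletter : (a • g • y).level ≤ (g • y).level + 1 := by
      rcases smul_letter_cases ha (g • y) with h | ⟨i, b, -, c, -, p, hy, hp, h⟩ <;> rw [h]
      · exact Nat.le_succ _
      · exact hp.level_le.trans (Nat.succ_le_succ hy.le_level)
    have := ih hg
    change ((a * g) • y).level ≤ _
    rw [mul_smul]
    omega

theorem ncard_orbitBall_entry_le (v : T.V 0) (n : ℕ) :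
    (orbitBall (freeBasis α) n (T.entry v)).ncard ≤
      ∑ i ∈ Finset.range (n + 1), Nat.card (T.V i) * Nat.card (T.gate i).Q := by
  refine (Set.ncard_le_ncard ?_ (T.finite_setOf_level_lt (n + 1))).trans
    (T.ncard_setOf_level_lt_le (n + 1))
  rintro _ ⟨g, hg, rfl⟩
  exact Nat.lt_succ_of_le (level_smul_le hg (T.entry v))

end Action

section Trap

/-- The points of level at most `N` which, when at level `N`, lie within distance `m` of the entry
of their gate. If the exit of gate `N` is farther than `m`, no edge leads from this set to level
`N + 1`. -/
def near (T : GroupTree α) (N m : ℕ) : Set T.Point :=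
  {y | y.level ≤ N ∧
    (y.level = N → y.elt ∈ (T.gate y.level).φ '' wordBall (freeBasis α) m)}

variable {T : GroupTree α} {N M m n i : ℕ} {y : T.Point} {a g w : FreeGroup α}

theorem finite_near (T : GroupTree α) (N m : ℕ) : (T.near N m).Finite :=
  (T.finite_setOf_level_lt (N + 1)).subset fun _ hy => Nat.lt_succ_of_le hy.1

theorem near_mono (h : m ≤ n) : T.near N m ⊆ T.near N n :=
  fun _ hy => ⟨hy.1, fun hN => Set.image_mono (wordBall_mono h) (hy.2 hN)⟩

theorem translation_mem_near (hg : g ∈ wordBall (freeBasis α) n) (hy : y ∈ T.near N m) :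
    T.translation g y ∈ T.near N (n + m) := by
  refine ⟨hy.1, fun hN => ?_⟩
  obtain ⟨h, hh, hhy⟩ := hy.2 hN
  exact ⟨g * h, mul_mem_wordBall hg hh, (map_mul _ g h).trans (congrArg _ hhy)⟩

theorem IsPort.mem_near (hy : T.IsPort i y) (hi : i < N) (m : ℕ) : y ∈ T.near N m := by
  rcases hy with ⟨v, rfl⟩ | ⟨v, rfl⟩
  · exact ⟨hi.le, fun hN => absurd hN hi.ne⟩
  · exact ⟨hi, fun _ => ⟨1, one_mem_wordBall m, map_one _⟩⟩

theorem IsPort.lt_of_mem_near (hy : T.IsPort i y) (hmem : y ∈ T.near N m)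
    (hm : (T.gate N).exit ∉ (T.gate N).φ '' wordBall (freeBasis α) m) : i < N := by
  rcases hy with ⟨v, rfl⟩ | ⟨v, rfl⟩
  · refine lt_of_le_of_ne hmem.1 ?_
    rintro rfl
    exact hm (hmem.2 rfl)
  · exact hmem.1

theorem smul_letter_mem_near (hM : (T.gate N).exit ∉ (T.gate N).φ '' wordBall (freeBasis α) M)
    (ha : a ∈ wordBall (freeBasis α) 1) (hm : 1 + m ≤ M) (hy : y ∈ T.near N m) :
    a • y = T.translation a y ∨ a • y ∈ T.near N 1 := by
  refine (smul_letter_cases ha y).imp_right ?_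
  rintro ⟨i, b, hb, c, hc, p, hby, hp, h⟩
  have hi : i < N := hby.lt_of_mem_near (near_mono hm (translation_mem_near hb hy)) hM
  exact h ▸ translation_mem_near hc (hp.mem_near hi 0)

theorem smul_mem_near (hM : (T.gate N).exit ∉ (T.gate N).φ '' wordBall (freeBasis α) M)
    (hg : g ∈ wordBall (freeBasis α) n) (hn : n + m ≤ M) (hy : y ∈ T.near N m) :
    g • y = T.translation g y ∨ g • y ∈ T.near N n := by
  induction n generalizing g with
  | zero =>
    obtain rfl := mem_wordBall_zero.1 hg
    exact .inl (by simp)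
  | succ n ih =>
    rw [add_comm n, wordBall_add] at hg
    obtain ⟨a, ha, g, hg, rfl⟩ := hg
    change (a * g) • y = T.translation (a * g) y ∨ (a * g) • y ∈ T.near N (n + 1)
    rw [mul_smul, map_mul, Equiv.Perm.mul_apply]
    have h1 : T.near N 1 ⊆ T.near N (n + 1) := near_mono (by omega)
    rcases ih hg (by omega) with h | h
    · rw [h]
      exact (smul_letter_mem_near hM ha (by omega) (translation_mem_near hg hy)).imp_right (@h1 _)
    · refine .inr ((smul_letter_mem_near hM ha (by omega) h).elim (fun ha' => ?_) (@h1 _))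
      rw [ha', add_comm n]
      exact translation_mem_near ha h

theorem mapsTo_smul_near (hw : (T.gate N).Blocks w) :
    ∃ r, Set.MapsTo (w • ·) (T.near N r) (T.near N r) := by
  obtain ⟨hφ, r, hr, hexit⟩ := hw
  refine ⟨r, fun y hy => (smul_mem_near hexit hr (two_mul r).ge hy).elim (fun h => ?_) id⟩
  change w • y ∈ _
  rw [h]
  refine ⟨hy.1, ?_⟩
  rintro rfl
  obtain ⟨g, hg, hgy⟩ := hy.2 rfl
  exact ⟨g, hg, hgy.trans (mul_eq_right.2 hφ).symm⟩

theorem essential_stabilizer_entry (T : GroupTree α) (h : ∀ w, ∃ i, (T.gate i).Blocks w)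
    (v : T.V 0) : Essential (MulAction.stabilizer (FreeGroup α) (T.entry v)) := by
  refine essential_of_forall_exists_pow_mem fun w => ?_
  obtain ⟨N, hN⟩ := h w
  obtain ⟨r, hr⟩ := mapsTo_smul_near hN
  exact exists_pow_mem_stabilizer (T.finite_near N r) hr
    ⟨Nat.zero_le N, fun _ => ⟨1, one_mem_wordBall r, map_one _⟩⟩

end Trap

section Reach

variable {T : GroupTree α} {i n d : ℕ}

theorem portPerm_eq_self_or (x : α) (v : T.V i) (k : (T.gate i).Q) :
    T.portPerm x ⟨i, v, k⟩ = ⟨i, v, k⟩ ∨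
      T.letter i = x ∧ k = (T.gate i).exit ∨ T.letter i ≠ x ∧ k = 1 := by
  refine (portPerm_cases x ⟨i, v, k⟩).imp_right ?_
  rintro ⟨j, hj, -, ⟨w, hw⟩ | ⟨w, hw⟩⟩
  · obtain rfl : i = j := congrArg Point.level hw
    exact .inl ⟨hj, by simpa [exit] using congr_arg_heq Point.elt hw⟩
  · obtain rfl : i = j + 1 := congrArg Point.level hw
    exact .inr ⟨hj ▸ T.letter_succ_ne j, by simpa [entry] using congr_arg_heq Point.elt hw⟩

theorem translation_pow_apply (x : α) (m : ℕ) (v : T.V i) (k : (T.gate i).Q) :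
    (T.translation (FreeGroup.of x) ^ m) ⟨i, v, k⟩ =
      ⟨i, v, (T.gate i).φ (FreeGroup.of x) ^ m * k⟩ := by
  rw [← map_pow, translation_apply, map_pow]

/-- Until the first visit to the only point of the gate that `portPerm x` may move, powers of `x`
act by translations. -/
theorem mem_orbitBall_of_portPerm_fixed {x : α} {v : T.V i} {k l : (T.gate i).Q}
    (hkl : l * k⁻¹ ∈ Subgroup.zpowers ((T.gate i).φ (FreeGroup.of x)))
    (hfix : ∀ j ≠ l, T.portPerm x ⟨i, v, j⟩ = ⟨i, v, j⟩) :
    (⟨i, v, l⟩ : T.Point) ∈ orbitBall (freeBasis α) (Nat.card (T.gate i).Q) ⟨i, v, k⟩ := by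
  classical
  obtain ⟨m, hm, hml⟩ := Finset.mem_image.1 (mem_zpowers_iff_mem_range_orderOf.1 hkl)
  have htranslation : (T.translation (FreeGroup.of x) ^ m) ⟨i, v, k⟩ = ⟨i, v, l⟩ := by
    rw [translation_pow_apply, hml, inv_mul_cancel_right]
  obtain ⟨n, hn, hnl⟩ := exists_pow_apply_eq_of_agree
    (σ := MulAction.toPermHom (FreeGroup α) T.Point (FreeGroup.of x)) htranslation fun j hj => by
      rw [translation_pow_apply] at hj ⊢
      rw [MulAction.toPermHom_apply, MulAction.toPerm_apply, of_smul, hfix]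
      rintro rfl
      exact hj rfl
  have hcard : n ≤ Nat.card (T.gate i).Q :=
    hn.trans ((Finset.mem_range.1 hm).le.trans orderOf_le_card)
  rw [← map_pow] at hnl
  exact ⟨FreeGroup.of x ^ n, wordBall_mono hcard (pow_mem_wordBall (Set.mem_range_self x) n), hnl⟩

theorem exit_mem_orbitBall_entry (v : T.V i) :
    T.exit v ∈ orbitBall (freeBasis α) (Nat.card (T.gate i).Q) (T.entry v) := by
  obtain ⟨x, hx⟩ := (T.gate i).exit_mem
  by_cases hletter : T.letter i = x
  · refine mem_orbitBall_of_portPerm_fixed (by simpa using hx) fun j hj => ?_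
    simpa [hletter, hj] using portPerm_eq_self_or x v j
  · refine mem_orbitBall_symm (mem_orbitBall_of_portPerm_fixed (by simpa using hx) fun j hj => ?_)
    simpa [hletter, hj] using portPerm_eq_self_or x v j

theorem portPerm_mem_orbitBall (x : α) (y : T.Point) :
    T.portPerm x y ∈
      orbitBall (freeBasis α) (1 + Nat.card (T.gate (T.portPerm x y).level).Q) y := by
  by_cases hy : T.portPerm x y = y
  · exact hy.symm ▸ mem_orbitBall_self _ y
  have hmoved : T.portPerm x (T.portPerm x y) ≠ T.portPerm x y :=
    fun h => hy ((T.portPerm x).injective h)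
  have hstep : T.translation (FreeGroup.of x) (T.portPerm x y) ∈ orbitBall (freeBasis α) 1 y :=
    ⟨FreeGroup.of x, mem_wordBall_one.2 (.inr (.inl ⟨x, rfl⟩)), of_smul x y⟩
  refine mem_orbitBall_trans hstep ?_
  generalize T.portPerm x y = p at hmoved ⊢
  obtain ⟨i, v, l⟩ := p
  refine mem_orbitBall_of_portPerm_fixed (x := x) (by simp) fun j hj => ?_
  have hl := (portPerm_eq_self_or x v l).resolve_left hmoved
  refine (portPerm_eq_self_or x v j).resolve_right fun hj' => hj ?_
  grind

theorem portPerm_pow_mem_orbitBall {x : α} {u : T.V i} {y : T.Point}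
    (hy : T.glue x y = T.exit u) (m : ℕ) :
    (T.portPerm x ^ m) y ∈ orbitBall (freeBasis α)
      (m * (1 + Nat.card (T.gate i).Q + Nat.card (T.gate (i + 1)).Q)) y := by
  induction m generalizing y with
  | zero => exact mem_orbitBall_self _ y
  | succ m ih =>
    have hglue : T.glue x (T.portPerm x y) = T.exit u := (glue_portPerm x y).trans hy
    rw [pow_succ, Equiv.Perm.mul_apply, Nat.succ_mul, add_comm]
    refine mem_orbitBall_trans (orbitBall_mono ?_ (portPerm_mem_orbitBall x y)) (ih hglue)
    rcases glue_fiber_exit_subset x u hglue with h | ⟨v, -, h⟩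
    · rw [h]
      exact Nat.le_add_right _ _
    · rw [← h]
      exact Nat.add_le_add_right (Nat.le_add_right _ _) _

theorem entry_mem_orbitBall_entry_parent (hd : ∀ u : T.V i, (T.parent ⁻¹' {u}).ncard ≤ d)
    (v : T.V (i + 1)) : T.entry v ∈ orbitBall (freeBasis α)
      ((d + 1) * (1 + Nat.card (T.gate i).Q + Nat.card (T.gate (i + 1)).Q))
      (T.entry (T.parent v)) := by
  have hexit := glue_exit (T.parent v)
  obtain ⟨m, hm, hmv⟩ := exists_portPerm_pow (hexit.trans (glue_entry v).symm)
  rw [hexit] at hm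
  have hmd : m ≤ d := by
    have := ncard_glue_fiber_exit_le (T.letter i) (T.parent v)
    have := hd (T.parent v)
    omega
  refine orbitBall_mono ?_ (mem_orbitBall_trans (exit_mem_orbitBall_entry (T.parent v))
    (hmv ▸ portPerm_pow_mem_orbitBall hexit m))
  rw [add_one_mul, add_comm]
  exact Nat.add_le_add (Nat.mul_le_mul_right _ hmd) (by omega)

theorem entry_mem_orbitBall_root (hd : ∀ i, ∀ u : T.V i, (T.parent ⁻¹' {u}).ncard ≤ d)
    [Subsingleton (T.V 0)] (v₀ : T.V 0) (v : T.V n) : T.entry v ∈ orbitBall (freeBasis α)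
      ((d + 1) * ∑ i ∈ Finset.range n,
        (1 + Nat.card (T.gate i).Q + Nat.card (T.gate (i + 1)).Q)) (T.entry v₀) := by
  induction n with
  | zero => exact Subsingleton.elim v₀ v ▸ mem_orbitBall_self _ _
  | succ n ih =>
    rw [Finset.sum_range_succ, mul_add]
    exact mem_orbitBall_trans (ih (T.parent v)) (entry_mem_orbitBall_entry_parent (hd n) v)

theorem sum_card_le_ncard_orbitBall [Finite α]
    (hd : ∀ i, ∀ u : T.V i, (T.parent ⁻¹' {u}).ncard ≤ d) [Subsingleton (T.V 0)] (v₀ : T.V 0)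
    (hgate : ∀ n, ∑ i ∈ Finset.range (n + 1), Nat.card (T.gate i).Q ≤ 2 * n + 1) (n : ℕ) :
    ∑ i ∈ Finset.range (n + 1), Nat.card (T.V i) ≤
      (orbitBall (freeBasis α) (5 * (d + 1) * n) (T.entry v₀)).ncard := by
  let e (z : Σ i : Fin (n + 1), T.V i) : T.Point := T.entry z.2
  have he : Function.Injective e := by
    rintro ⟨i, v⟩ ⟨j, w⟩ h
    obtain rfl : i = j := Fin.ext (congrArg Point.level h)
    simpa [e, entry] using h
  calc
    ∑ i ∈ Finset.range (n + 1), Nat.card (T.V i) = (Set.range e).ncard := by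
      rw [Finset.sum_range, ← Nat.card_sigma, ← Set.image_univ, Set.ncard_image_of_injective _ he,
        Set.ncard_univ]
    _ ≤ _ := Set.ncard_le_ncard ?_ (finite_orbitBall (Set.finite_range _) _ _)
  rintro _ ⟨⟨i, v⟩, rfl⟩
  refine orbitBall_mono ?_ (entry_mem_orbitBall_root hd v₀ v)
  have hi : i.1 ≤ n := Nat.le_of_lt_succ i.2
  have hsum := hgate i
  have hsum' := hgate i
  have hpos : 0 < Nat.card (T.gate 0).Q := Nat.card_pos
  have hpos' : 0 < Nat.card (T.gate i).Q := Nat.card_pos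
  rw [Finset.sum_range_succ] at hsum
  rw [Finset.sum_range_succ'] at hsum'
  rw [Finset.sum_add_distrib, Finset.sum_add_distrib, Finset.sum_const, Finset.card_range,
    smul_eq_mul, mul_one, mul_comm 5, mul_assoc]
  exact Nat.mul_le_mul_left _ (by omega)

end Reach

end GroupTree

theorem exists_ge_forall_le (f : ℕ → ℕ) (n : ℕ) : ∃ N ≥ n, ∀ j ≥ n, f N ≤ f j := by
  obtain ⟨N, hN, h⟩ := exists_minimalFor_of_wellFoundedLT (fun j => n ≤ j) f ⟨n, le_rfl⟩
  exact ⟨N, hN, fun j hj => (le_total (f N) (f j)).elim id fun hle => h hj hle⟩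

theorem exists_strictMono_minimizers (f s : ℕ → ℕ) :
    ∃ N : ℕ → ℕ, StrictMono N ∧ ∀ k, (∀ j ≥ N k, f (N k) ≤ f j) ∧ s k ≤ N k := by
  refine Filter.extraction_forall_of_frequently
    (P := fun k N => (∀ j ≥ N, f N ≤ f j) ∧ s k ≤ N) fun k => Filter.frequently_atTop.2 fun a => ?_
  obtain ⟨b, hb, hmin⟩ := exists_ge_forall_le f (max a (s k))
  obtain ⟨hab, hsb⟩ := max_le_iff.1 hb
  exact ⟨b, hab, fun j hj => hmin j (hb.trans hj), hsb⟩

theorem sum_range_extend_le {N q : ℕ → ℕ} (hN : Function.Injective N)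
    (hq : ∀ k, ∑ j ∈ Finset.range (k + 1), q j ≤ N k) (n : ℕ) :
    ∑ i ∈ Finset.range (n + 1), Function.extend N q 0 i ≤ n := by
  rw [← Finset.sum_preimage N _ hN.injOn _ fun i _ hi => Function.extend_apply' q (0 : ℕ → ℕ) i hi]
  simp only [hN.extend_apply]
  set s := (Finset.range (n + 1)).preimage N hN.injOn
  rcases s.eq_empty_or_nonempty with hs | hs
  · simp [hs]
  · have hmax : N (s.max' hs) ≤ n :=
      Finset.mem_range_succ_iff.1 (Finset.mem_preimage.1 (s.max'_mem hs))
    refine le_trans (Finset.sum_le_sum_of_subset fun k hk => ?_) ((hq (s.max' hs)).trans hmax)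
    exact Finset.mem_range_succ_iff.2 (s.le_max' k hk)

/-- The mass of `q` up to `n` is paid for by the values of `f` on `(n, 2n]`. -/
theorem sum_mul_succ_le {f q : ℕ → ℕ} {n : ℕ} (hf : ∀ i, q i ≠ 0 → ∀ j ≥ i, f i ≤ f j)
    (hq : ∑ i ∈ Finset.range (n + 1), q i ≤ n) :
    ∑ i ∈ Finset.range (n + 1), f i * (q i + 1) ≤ ∑ i ∈ Finset.range (2 * n + 1), f i := by
  obtain ⟨N, hN, hmin⟩ := exists_ge_forall_le f n
  have hle (i : ℕ) (hi : i ∈ Finset.range (n + 1)) : f i * q i ≤ f N * q i := by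
    by_cases h : q i = 0
    · simp [h]
    · exact Nat.mul_le_mul_right _ (hf i h N ((Finset.mem_range_succ_iff.1 hi).trans hN))
  have hmass : ∑ i ∈ Finset.range (n + 1), f i * q i ≤ ∑ i ∈ Finset.Ico (n + 1) (2 * n + 1), f i :=
    calc
      _ ≤ ∑ i ∈ Finset.range (n + 1), f N * q i := Finset.sum_le_sum hle
      _ = (∑ i ∈ Finset.range (n + 1), q i) * f N := by rw [← Finset.mul_sum, mul_comm]
      _ ≤ n * f N := Nat.mul_le_mul_right _ hq
      _ = (Finset.Ico (n + 1) (2 * n + 1)).card • f N := by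
        rw [Nat.card_Ico, smul_eq_mul]
        congr 1
        omega
      _ ≤ _ := Finset.card_nsmul_le_sum _ _ _ fun i hi =>
        hmin i ((Nat.le_succ n).trans (Finset.mem_Ico.1 hi).1)
  rw [← Finset.sum_range_add_sum_Ico f (show n + 1 ≤ 2 * n + 1 by omega)]
  simp only [mul_add, mul_one, Finset.sum_add_distrib]
  omega

theorem card_extend_default_le {α : Type*} [Nonempty α] {N : ℕ → ℕ} (hN : Function.Injective N)
    (G : ℕ → Gate α) (i : ℕ) :
    Nat.card (Function.extend N G default i).Q ≤
      Function.extend N (fun k => Nat.card (G k).Q) 0 i + 1 := by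
  by_cases hi : ∃ k, N k = i
  · obtain ⟨k, rfl⟩ := hi
    rw [hN.extend_apply, hN.extend_apply]
    exact Nat.le_succ _
  · rw [Function.extend_apply' _ _ _ hi, Function.extend_apply' _ _ _ hi]
    exact (Nat.card_unique (α := Unit)).le

theorem exists_gates {α : Type*} [Finite α] [Nontrivial α] (f : ℕ → ℕ) :
    ∃ gate : ℕ → Gate α, (∀ w, ∃ i, (gate i).Blocks w) ∧
      (∀ n, ∑ i ∈ Finset.range (n + 1), Nat.card (gate i).Q ≤ 2 * n + 1) ∧
      ∀ n, ∑ i ∈ Finset.range (n + 1), f i * Nat.card (gate i).Q ≤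
        ∑ i ∈ Finset.range (2 * n + 1), f i := by
  obtain ⟨e, he⟩ := exists_surjective_nat (FreeGroup α)
  choose G hG using fun k => exists_gate_blocks (e k)
  obtain ⟨N, hN, hmin⟩ := exists_strictMono_minimizers f fun k =>
    ∑ j ∈ Finset.range (k + 1), Nat.card (G j).Q
  let q := Function.extend N (fun k => Nat.card (G k).Q) 0
  have hcard := card_extend_default_le hN.injective G
  have hsum : ∀ n, ∑ i ∈ Finset.range (n + 1), q i ≤ n :=
    sum_range_extend_le hN.injective fun k => (hmin k).2
  have hf (i : ℕ) (hi : q i ≠ 0) : ∀ j ≥ i, f i ≤ f j := by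
    obtain ⟨k, rfl⟩ := not_imp_comm.1 (Function.extend_apply' _ _ i) hi
    exact (hmin k).1
  refine ⟨Function.extend N G default, fun w => ?_, fun n => ?_, fun n => ?_⟩
  · obtain ⟨k, rfl⟩ := he w
    exact ⟨N k, hN.injective.extend_apply G default k ▸ hG k⟩
  · refine (Finset.sum_le_sum fun i _ => hcard i).trans ?_
    rw [Finset.sum_add_distrib, Finset.sum_const, Finset.card_range, smul_eq_mul, mul_one]
    rw [two_mul, add_assoc]
    exact Nat.add_le_add_right (hsum n) _
  · exact (Finset.sum_le_sum fun i _ => Nat.mul_le_mul_left _ (hcard i)).trans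
      (sum_mul_succ_le hf (hsum n))

theorem exists_fin_map_ncard_fiber_le {m n d : ℕ} (h : m ≤ d * n) :
    ∃ p : Fin m → Fin n, ∀ j, (p ⁻¹' {j}).ncard ≤ d := by
  let e : Fin m → Fin d × Fin n := finProdFinEquiv.symm ∘ Fin.castLE h
  have he : Function.Injective e := finProdFinEquiv.symm.injective.comp (Fin.castLE_injective h)
  refine ⟨fun i => (e i).2, fun j => ?_⟩
  refine (Set.ncard_le_ncard_of_injOn (t := Set.univ) (fun i => (e i).1) (fun _ _ => trivial)
    fun i hi i' hi' h => he (Prod.ext h (hi.trans hi'.symm))).trans_eq ?_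
  rw [Set.ncard_univ, Nat.card_fin]

theorem exists_groupTree {α : Type*} [Nontrivial α] (f : ℕ → ℕ) {d : ℕ}
    (hd : ∀ i, f (i + 1) ≤ d * f i) (gate : ℕ → Gate α) :
    ∃ T : GroupTree α, (T.V = fun i => Fin (f i)) ∧ T.gate = gate ∧
      ∀ i, ∀ u : T.V i, (T.parent ⁻¹' {u}).ncard ≤ d := by
  choose parent hparent using fun i => exists_fin_map_ncard_fiber_le (hd i)
  obtain ⟨x, y, hxy⟩ := exists_pair_ne α
  refine ⟨⟨fun i => Fin (f i), fun {i} => parent i, gate, fun i => if Even i then x else y,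
    fun i => ?_⟩, rfl, rfl, hparent⟩
  by_cases hi : Even i <;> simp [hi, hxy, hxy.symm, Nat.even_add_one]

theorem exists_essential_subgroup_with_cogrowth_general {α : Type*} [Finite α] [Nontrivial α]
    {f : ℕ → ℕ} (h0 : f 0 = 1) {d : ℕ} (hd : ∀ i, f (i + 1) ≤ d * f i) :
    ∃ H : Subgroup (FreeGroup α), Essential H ∧
      ((¬∃ B, ∀ n, ∑ i ∈ Finset.range (n + 1), f i ≤ B) → H.index = 0) ∧
      ∃ C, 0 < C ∧ ∀ n,
        cogrowth (freeBasis α) H n ≤ ∑ i ∈ Finset.range (C * n + 1), f i ∧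
        ∑ i ∈ Finset.range (n + 1), f i ≤ cogrowth (freeBasis α) H (C * n) := by
  obtain ⟨gate, hblocks, hcard, hgrowth⟩ := exists_gates (α := α) f
  obtain ⟨T, hV, rfl, hfiber⟩ := exists_groupTree f hd gate
  have hcardV (i : ℕ) : Nat.card (T.V i) = f i := by rw [hV, Nat.card_fin]
  obtain ⟨hsub, ⟨v₀⟩⟩ := Nat.card_eq_one_iff_unique.1 ((hcardV 0).trans h0)
  let H := MulAction.stabilizer (FreeGroup α) (T.entry v₀)
  have hupper (n : ℕ) : cogrowth (freeBasis α) H n ≤ ∑ i ∈ Finset.range (2 * n + 1), f i := by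
    rw [cogrowth_stabilizer]
    exact (T.ncard_orbitBall_entry_le v₀ n).trans (by simpa only [hcardV] using hgrowth n)
  have hlower (n : ℕ) :
      ∑ i ∈ Finset.range (n + 1), f i ≤ cogrowth (freeBasis α) H (5 * (d + 1) * n) := by
    rw [cogrowth_stabilizer]
    simpa only [hcardV] using T.sum_card_le_ncard_orbitBall hfiber v₀ hcard n
  refine ⟨H, T.essential_stabilizer_entry hblocks v₀, fun hunb => ?_, 5 * (d + 1), by omega,
    fun n => ⟨(hupper n).trans ?_, hlower n⟩⟩
  · by_contra hindex
    exact hunb ⟨H.index, fun n => (hlower n).trans (cogrowth_le_index _ hindex _)⟩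
  · refine Finset.sum_le_sum_of_subset (Finset.range_mono (Nat.succ_le_succ ?_))
    exact Nat.mul_le_mul_right n (by omega)

/-- Every function `α(n) = Σ_{i≤n} f_i` with `f_0 = 1`, the support of `f` an initial
segment, and `f_{i+1} ≤ d·f_i`, is (up to equivalence) the cogrowth function of an
essential subgroup of the free group of rank two (of infinite index when `α` is
unbounded). -/
theorem exists_essential_subgroup_with_cogrowth (f : ℕ → ℕ) (h0 : f 0 = 1)
    (hsupp : ∀ i j : ℕ, i ≤ j → f j ≠ 0 → f i ≠ 0)
    (hd : ∃ d : ℕ, 0 < d ∧ ∀ i, f (i + 1) ≤ d * f i)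
    (α : ℕ → ℕ) (hα : ∀ n, α n = ∑ i ∈ Finset.range (n + 1), f i) :
    ∃ H : Subgroup (FreeGroup Bool), Essential H ∧
      ((¬ ∃ B : ℕ, ∀ n, α n ≤ B) → H.index = 0) ∧
      ∃ C : ℕ, 0 < C ∧ ∀ n,
        cogrowth {FreeGroup.of true, FreeGroup.of false} H n ≤ α (C * n) ∧
        α n ≤ cogrowth {FreeGroup.of true, FreeGroup.of false} H (C * n) := by
  obtain ⟨d, -, hd⟩ := hd
  simpa only [hα, freeBasis, Bool.range_eq, Set.pair_comm (FreeGroup.of false)] using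
    exists_essential_subgroup_with_cogrowth_general (α := Bool) h0 hd
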